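/- arXiv:2302.08234 — 6 statements merged into one kernel-verified Lean document; each statement's English description precedes it below -/
import Mathlib

section
/- Let λ > 0 and let n ≥ 1 be an integer. Let S_n be the sum of n i.i.d. exponential random variables with rate λ (i.e., the sum function on the n-fold product of the exponential measure with rate λ). Then for every t with 0 < t ≤ 1: ℙ(S_n ≥ (1+t)·n/λ) ≤ exp(−n t²/4) and ℙ(S_n ≤ (1−t)·n/λ) ≤ exp(−n t²/4). -/
open MeasureTheory ProbabilityTheory Real

/-!
Tilting the `Gamma(a, r)` density by `exp (s x)` gives `(r / (r - s)) ^ a` times the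
`Gamma(a, r - s)` density, so the moment generating function is `(r / (r - s)) ^ a`, and a sum of
independent such variables with shapes `a i` has the same one with `A = ∑ a i`. In the Chernoff
bound at the threshold `x A / r` the optimal tilt is `s = r - r / x`; it bounds the upper tail for
`x ≥ 1` and the lower tail for `x ≤ 1` by the same quantity `(x exp (1 - x)) ^ A`, which is at most
`exp (-A (x - 1) ^ 2 / 4)` for `x ≤ 2`.
-/

section GammaMGF

variable {a r s : ℝ}

lemma exp_mul_mul_gammaPDFReal (hr : 0 < r) (hs : s < r) (x : ℝ) :
    exp (s * x) * gammaPDFReal a r x = (r / (r - s)) ^ a * gammaPDFReal a (r - s) x := by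
  have hrs : 0 < r - s := sub_pos.2 hs
  have hexp : exp (-((r - s) * x)) = exp (s * x) * exp (-(r * x)) := by
    rw [← exp_add]
    ring_nf
  unfold gammaPDFReal
  split_ifs
  · rw [hexp, div_rpow hr.le hrs.le]
    field_simp
  · simp

lemma lintegral_exp_mul_gammaMeasure (ha : 0 < a) (hr : 0 < r) (hs : s < r) :
    ∫⁻ x, ENNReal.ofReal (exp (s * x)) ∂(gammaMeasure a r)
      = ENNReal.ofReal ((r / (r - s)) ^ a) := by
  have hrs : 0 < r - s := sub_pos.2 hs
  have hmeas (q : ℝ) : Measurable (gammaPDF a q) := (measurable_gammaPDFReal a q).ennreal_ofReal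
  calc
    _ = ∫⁻ x, gammaPDF a r x * ENNReal.ofReal (exp (s * x)) :=
      lintegral_withDensity_eq_lintegral_mul _ (hmeas r) (by fun_prop)
    _ = ∫⁻ x, ENNReal.ofReal ((r / (r - s)) ^ a) * gammaPDF a (r - s) x := by
      refine lintegral_congr fun x => ?_
      rw [gammaPDF, gammaPDF, mul_comm, ← ENNReal.ofReal_mul (exp_pos _).le,
        ← ENNReal.ofReal_mul (by positivity), exp_mul_mul_gammaPDFReal hr hs]
    _ = ENNReal.ofReal ((r / (r - s)) ^ a) := by
      rw [lintegral_const_mul _ (hmeas _), lintegral_gammaPDF_eq_one ha hrs, mul_one]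

lemma mgf_id_gammaMeasure (ha : 0 < a) (hr : 0 < r) (hs : s < r) :
    mgf id (gammaMeasure a r) s = (r / (r - s)) ^ a := by
  simp only [mgf, id_eq]
  rw [integral_eq_lintegral_of_nonneg_ae (.of_forall fun _ => (exp_pos _).le) (by fun_prop),
    lintegral_exp_mul_gammaMeasure ha hr hs,
    ENNReal.toReal_ofReal (rpow_nonneg (div_pos hr (sub_pos.2 hs)).le a)]

lemma mgf_sum_of_hasLaw_gammaMeasure {Ω ι : Type*} {mΩ : MeasurableSpace Ω} {μ : Measure Ω}
    {X : ι → Ω → ℝ} {a : ι → ℝ} (ha : ∀ i, 0 < a i) (hr : 0 < r) (hindep : iIndepFun X μ)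
    (hX : ∀ i, HasLaw (X i) (gammaMeasure (a i) r) μ) (I : Finset ι) (hs : s < r) :
    mgf (∑ i ∈ I, X i) μ s = (r / (r - s)) ^ ∑ i ∈ I, a i := by
  have hmgf (i : ι) : mgf (X i) μ s = (r / (r - s)) ^ a i := by
    rw [← mgf_id_map (hX i).aemeasurable, (hX i).map_eq, mgf_id_gammaMeasure (ha i) hr hs]
  rw [hindep.mgf_sum₀ (fun i => (hX i).aemeasurable), Finset.prod_congr rfl fun i _ => hmgf i,
    rpow_sum_of_pos (div_pos hr (sub_pos.2 hs))]

end GammaMGF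

section Chernoff

variable {Ω : Type*} {mΩ : MeasurableSpace Ω} {μ : Measure Ω} {S : Ω → ℝ} {A r x : ℝ}

lemma exp_neg_mul_mul_mgf_eq_rpow (hr : 0 < r) (hx : 0 < x)
    (hS : ∀ s < r, mgf S μ s = (r / (r - s)) ^ A) :
    exp (-(r - r / x) * (x * A / r)) * mgf S μ (r - r / x) = (x * exp (1 - x)) ^ A := by
  have hexponent : -(r - r / x) * (x * A / r) = (1 - x) * A := by
    field_simp
    ring
  have hratio : r / (r - (r - r / x)) = x := by
    rw [sub_sub_cancel, div_div_cancel₀ hr.ne']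
  rw [hS _ (sub_lt_self r (div_pos hr hx)), hexponent, hratio, exp_mul,
    mul_rpow hx.le (exp_pos _).le, mul_comm]

variable [IsProbabilityMeasure μ]

lemma integrable_exp_mul_of_mgf_eq_rpow (hr : 0 < r)
    (hS : ∀ s < r, mgf S μ s = (r / (r - s)) ^ A) {s : ℝ} (hs : s < r) :
    Integrable (fun ω => exp (s * S ω)) μ := by
  rw [← mgf_pos_iff, hS s hs]
  exact rpow_pos_of_pos (div_pos hr (sub_pos.2 hs)) A

lemma measureReal_ge_le_mul_exp_one_sub_rpow (hr : 0 < r)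
    (hS : ∀ s < r, mgf S μ s = (r / (r - s)) ^ A) (hx : 1 ≤ x) :
    μ.real {ω | x * A / r ≤ S ω} ≤ (x * exp (1 - x)) ^ A := by
  have hx0 : 0 < x := by positivity
  rw [← exp_neg_mul_mul_mgf_eq_rpow hr hx0 hS]
  exact measure_ge_le_exp_mul_mgf _ (sub_nonneg.2 (div_le_self hr.le hx))
    (integrable_exp_mul_of_mgf_eq_rpow hr hS (sub_lt_self r (div_pos hr hx0)))

lemma measureReal_le_le_mul_exp_one_sub_rpow (hr : 0 < r) (hA : 0 ≤ A)
    (hS : ∀ s < r, mgf S μ s = (r / (r - s)) ^ A) (hx0 : 0 ≤ x) (hx1 : x ≤ 1) :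
    μ.real {ω | S ω ≤ x * A / r} ≤ (x * exp (1 - x)) ^ A := by
  have hpos {y : ℝ} (hy0 : 0 < y) (hy1 : y ≤ 1) :
      μ.real {ω | S ω ≤ y * A / r} ≤ (y * exp (1 - y)) ^ A := by
    rw [← exp_neg_mul_mul_mgf_eq_rpow hr hy0 hS]
    exact measure_le_le_exp_mul_mgf _ (sub_nonpos.2 (le_div_self hr.le hy0 hy1))
      (integrable_exp_mul_of_mgf_eq_rpow hr hS (sub_lt_self r (div_pos hr hy0)))
  rcases hx0.eq_or_lt with rfl | hx0
  · -- The optimal tilt degenerates to `-∞` at `x = 0`, so this case is a limit.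
    have hcont : Continuous fun y : ℝ => (y * exp (1 - y)) ^ A :=
      (by fun_prop : Continuous fun y : ℝ => y * exp (1 - y)).rpow_const fun _ => .inr hA
    refine ge_of_tendsto (hcont.tendsto 0 |>.mono_left (nhdsWithin_le_nhds (s := Set.Ioi 0))) ?_
    filter_upwards [Ioc_mem_nhdsGT one_pos] with y hy
    have hthreshold : 0 * A / r ≤ y * A / r := by
      gcongr
      exact hy.1.le
    have hsub : {ω | S ω ≤ 0 * A / r} ⊆ {ω | S ω ≤ y * A / r} :=
      fun ω (hω : S ω ≤ 0 * A / r) => hω.trans hthreshold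
    exact (measureReal_mono hsub).trans (hpos hy.1 hy.2)
  · exact hpos hx0 hx1

end Chernoff

lemma one_add_le_exp_sub_sq_div_four {u : ℝ} (hu : u ≤ 1) : 1 + u ≤ exp (u - u ^ 2 / 4) := by
  rcases le_total 0 u with hu0 | hu0
  · have hlin : 3 / 4 * u ≤ u - u ^ 2 / 4 := by nlinarith
    have hsq : (3 / 4 * u) ^ 2 ≤ (u - u ^ 2 / 4) ^ 2 := by gcongr
    calc
      1 + u ≤ 1 + (u - u ^ 2 / 4) + (u - u ^ 2 / 4) ^ 2 / 2 := by linarith [sq_nonneg u]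
      _ ≤ exp (u - u ^ 2 / 4) := quadratic_le_exp_of_nonneg (by linarith)
  rcases le_total (1 + u) 0 with hu1 | hu1
  · exact hu1.trans (exp_pos _).le
  have hcube : u ^ 3 ≤ 0 := Odd.pow_nonpos (by decide) hu0
  calc
    1 + u ≤ 1 + u - u ^ 3 / 8 + u ^ 4 / 64 := by linarith [show 0 ≤ u ^ 4 by positivity]
    _ = (1 - (u ^ 2 / 4 - u) / (2 : ℕ)) ^ 2 := by
      push_cast
      ring
    _ ≤ exp (-(u ^ 2 / 4 - u)) := one_sub_div_pow_le_exp_neg (by push_cast; nlinarith)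
    _ = exp (u - u ^ 2 / 4) := by rw [neg_sub]

lemma mul_exp_one_sub_rpow_le {A x : ℝ} (hA : 0 ≤ A) (hx0 : 0 ≤ x) (hx2 : x ≤ 2) :
    (x * exp (1 - x)) ^ A ≤ exp (-(A * (x - 1) ^ 2) / 4) := by
  have hx : x ≤ exp (x - 1 - (x - 1) ^ 2 / 4) := by
    simpa using one_add_le_exp_sub_sq_div_four (u := x - 1) (by linarith)
  calc
    (x * exp (1 - x)) ^ A ≤ (exp (x - 1 - (x - 1) ^ 2 / 4) * exp (1 - x)) ^ A := by gcongr
    _ = exp (-(A * (x - 1) ^ 2) / 4) := by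
      rw [← exp_add, ← exp_mul]
      ring_nf

theorem exp_sum_concentration_general {Ω ι : Type*} {mΩ : MeasurableSpace Ω} {μ : Measure Ω}
    {X : ι → Ω → ℝ} {a : ι → ℝ} {r t : ℝ} (ha : ∀ i, 0 < a i) (hr : 0 < r)
    (hindep : iIndepFun X μ) (hX : ∀ i, HasLaw (X i) (gammaMeasure (a i) r) μ) (I : Finset ι)
    (ht0 : 0 ≤ t) (ht1 : t ≤ 1) :
    μ.real {ω | (1 + t) * (∑ i ∈ I, a i) / r ≤ ∑ i ∈ I, X i ω}
      ≤ exp (-((∑ i ∈ I, a i) * t ^ 2) / 4) ∧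
    μ.real {ω | ∑ i ∈ I, X i ω ≤ (1 - t) * (∑ i ∈ I, a i) / r}
      ≤ exp (-((∑ i ∈ I, a i) * t ^ 2) / 4) := by
  have := hindep.isProbabilityMeasure
  have hA : 0 ≤ ∑ i ∈ I, a i := Finset.sum_nonneg fun i _ => (ha i).le
  have hmgf (s : ℝ) (hs : s < r) := mgf_sum_of_hasLaw_gammaMeasure ha hr hindep hX I hs
  simp only [← Finset.sum_apply]
  constructor
  · refine (measureReal_ge_le_mul_exp_one_sub_rpow hr hmgf (by linarith)).trans ?_
    simpa using mul_exp_one_sub_rpow_le hA (x := 1 + t) (by linarith) (by linarith)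
  · refine (measureReal_le_le_mul_exp_one_sub_rpow hr hA hmgf
      (by linarith) (by linarith)).trans ?_
    simpa using mul_exp_one_sub_rpow_le hA (x := 1 - t) (by linarith) (by linarith)

/-- Lemma 2 (Arrival Rate Estimation), quantitative content: the sum `S_n` of `n` i.i.d.
exponential random variables with rate `λ` satisfies the two-sided tail bounds
`ℙ(S_n ≥ (1+t)·n/λ) ≤ exp(-n t²/4)` and `ℙ(S_n ≤ (1-t)·n/λ) ≤ exp(-n t²/4)`
for every `0 < t ≤ 1`. -/
theorem exp_sum_concentration (lam : ℝ) (hlam : 0 < lam) (n : ℕ) (hn : 1 ≤ n)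
    (t : ℝ) (ht0 : 0 < t) (ht1 : t ≤ 1) :
    (Measure.pi (fun _ : Fin n => expMeasure lam))
        {ω : Fin n → ℝ | (1 + t) * n / lam ≤ ∑ i, ω i}
      ≤ ENNReal.ofReal (Real.exp (-(n * t ^ 2) / 4)) ∧
    (Measure.pi (fun _ : Fin n => expMeasure lam))
        {ω : Fin n → ℝ | ∑ i, ω i ≤ (1 - t) * n / lam}
      ≤ ENNReal.ofReal (Real.exp (-(n * t ^ 2) / 4)) := by
  have := isProbabilityMeasure_expMeasure hlam
  have hindep : iIndepFun (fun i (ω : Fin n → ℝ) => ω i) (Measure.pi fun _ => expMeasure lam) :=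
    iIndepFun_pi (X := fun _ => id) fun _ => aemeasurable_id
  have hlaw (i : Fin n) : HasLaw (fun ω : Fin n → ℝ => ω i) (gammaMeasure 1 lam)
      (Measure.pi fun _ => expMeasure lam) :=
    (measurePreserving_eval (fun _ => expMeasure lam) i).hasLaw
  simp only [ENNReal.le_ofReal_iff_toReal_le (measure_ne_top _ _) (exp_pos _).le]
  simpa using! exp_sum_concentration_general (fun _ => one_pos) hlam hindep hlaw
    Finset.univ ht0.le ht1
end

section
/- Let U and V be finite sets, let T > 0, α ∈ [0,1], Δ ≥ 0, and let λ, λ̂ : V → ℝ be positive functions with λ(v) ≤ (1+Δ)·λ̂(v) for all v ∈ V. Let w : U × V → ℝ be nonnegative. For μ : V → ℝ and S > 0 call x : U × V → ℝ feasible for LP(μ, S) if 0 ≤ x(u,v) ≤ 1 for all u, v, ∑_{u∈U} x(u,v) ≤ μ(v)·S for all v, and ∑_{v∈V} x(u,v) ≤ 1 for all u. Then for every x feasible for LP(λ, T), the scaled vector ((1−α)/(1+Δ))·x is feasible for LP(λ̂, (1−α)T); consequently, the supremum of ∑_{u,v} w(u,v)·x(u,v) over x feasible for LP(λ̂, (1−α)T)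 is at least ((1−α)/(1+Δ)) times the supremum over x feasible for LP(λ, T). -/
open Finset

/-- `x` is a feasible solution for the matching LP with arrival rates `μ` and horizon `S`. -/
def LPFeasible {U V : Type*} [Fintype U] [Fintype V]
    (μ : V → ℝ) (S : ℝ) (x : U × V → ℝ) : Prop :=
  (∀ u v, 0 ≤ x (u, v) ∧ x (u, v) ≤ 1) ∧
  (∀ v, ∑ u, x (u, v) ≤ μ v * S) ∧
  (∀ u, ∑ v, x (u, v) ≤ 1)

section Scaling

open scoped Pointwise

variable {U V : Type*} [Fintype U] [Fintype V] {μ ν : V → ℝ} {S R c : ℝ}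

/-- The set of objective values `∑ w(u,v) x(u,v)` attained by the feasible solutions `x` of
`LP(μ, S)`; the optimal value of the LP is its supremum. -/
def lpValues (μ : V → ℝ) (S : ℝ) (w : U × V → ℝ) : Set ℝ :=
  {r | ∃ x : U × V → ℝ, LPFeasible μ S x ∧ r = ∑ p, w p * x p}

theorem LPFeasible.zero (hμS : ∀ v, 0 ≤ μ v * S) : LPFeasible μ S (0 : U × V → ℝ) := by
  simpa [LPFeasible] using hμS

theorem LPFeasible.const_mul {x : U × V → ℝ} (hx : LPFeasible μ S x)
    (hc₀ : 0 ≤ c) (hc₁ : c ≤ 1) (hμν : ∀ v, c * (μ v * S) ≤ ν v * R) :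
    LPFeasible ν R (fun p => c * x p) := by
  obtain ⟨hbox, hrate, hcap⟩ := hx
  refine ⟨fun u v => ⟨mul_nonneg hc₀ (hbox u v).1, mul_le_one₀ hc₁ (hbox u v).1 (hbox u v).2⟩,
    fun v => ?_, fun u => ?_⟩
  · calc ∑ u, c * x (u, v) = c * ∑ u, x (u, v) := (mul_sum ..).symm
      _ ≤ c * (μ v * S) := mul_le_mul_of_nonneg_left (hrate v) hc₀
      _ ≤ ν v * R := hμν v
  · calc ∑ v, c * x (u, v) = c * ∑ v, x (u, v) := (mul_sum ..).symm
      _ ≤ 1 := mul_le_one₀ hc₁ (sum_nonneg fun v _ => (hbox u v).1) (hcap u)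

theorem LPFeasible.sum_mul_le_sum_abs {x : U × V → ℝ} (hx : LPFeasible μ S x) (w : U × V → ℝ) :
    ∑ p, w p * x p ≤ ∑ p, |w p| := by
  refine sum_le_sum fun p _ => ?_
  obtain ⟨hx₀, hx₁⟩ := hx.1 p.1 p.2
  calc w p * x p ≤ |w p| * x p := mul_le_mul_of_nonneg_right (le_abs_self _) hx₀
    _ ≤ |w p| := mul_le_of_le_one_right (abs_nonneg _) hx₁

theorem lpValues_nonempty (hμS : ∀ v, 0 ≤ μ v * S) (w : U × V → ℝ) :
    (lpValues μ S w).Nonempty :=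
  ⟨_, 0, .zero hμS, rfl⟩

theorem bddAbove_lpValues (μ : V → ℝ) (S : ℝ) (w : U × V → ℝ) : BddAbove (lpValues μ S w) := by
  refine ⟨∑ p, |w p|, ?_⟩
  rintro _ ⟨x, hx, rfl⟩
  exact hx.sum_mul_le_sum_abs w

theorem smul_lpValues_subset (hc₀ : 0 ≤ c) (hc₁ : c ≤ 1)
    (hμν : ∀ v, c * (μ v * S) ≤ ν v * R) (w : U × V → ℝ) :
    c • lpValues μ S w ⊆ lpValues ν R w := by
  rintro _ ⟨_, ⟨x, hx, rfl⟩, rfl⟩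
  refine ⟨fun p => c * x p, hx.const_mul hc₀ hc₁ hμν, ?_⟩
  simp only [smul_eq_mul, mul_sum, mul_left_comm]

theorem mul_sSup_lpValues_le (hc₀ : 0 ≤ c) (hc₁ : c ≤ 1) (hμS : ∀ v, 0 ≤ μ v * S)
    (hμν : ∀ v, c * (μ v * S) ≤ ν v * R) (w : U × V → ℝ) :
    c * sSup (lpValues μ S w) ≤ sSup (lpValues ν R w) :=
  calc c * sSup (lpValues μ S w) = sSup (c • lpValues μ S w) :=
        (Real.sSup_smul_of_nonneg hc₀ _).symm
    _ ≤ sSup (lpValues ν R w) :=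
        csSup_le_csSup (bddAbove_lpValues ν R w) (lpValues_nonempty hμS w).smul_set
          (smul_lpValues_subset hc₀ hc₁ hμν w)

end Scaling

theorem lp_scaling_general {U V : Type*} [Fintype U] [Fintype V] {T α Δ : ℝ}
    (hT : 0 ≤ T) (hα : α ≤ 1) (hΔ : 0 < 1 + Δ) (hαΔ : 1 - α ≤ 1 + Δ)
    {lam lamhat : V → ℝ} (hlam : ∀ v, 0 ≤ lam v) (hest : ∀ v, lam v ≤ (1 + Δ) * lamhat v)
    (w : U × V → ℝ) :
    (∀ x : U × V → ℝ, LPFeasible lam T x →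
        LPFeasible lamhat ((1 - α) * T) (fun p => (1 - α) / (1 + Δ) * x p)) ∧
      (1 - α) / (1 + Δ) * sSup (lpValues lam T w) ≤
        sSup (lpValues lamhat ((1 - α) * T) w) := by
  have hc₀ : 0 ≤ (1 - α) / (1 + Δ) := div_nonneg (sub_nonneg.2 hα) hΔ.le
  have hc₁ : (1 - α) / (1 + Δ) ≤ 1 := (div_le_one hΔ).2 hαΔ
  have hrate (v : V) : (1 - α) / (1 + Δ) * (lam v * T) ≤ lamhat v * ((1 - α) * T) :=
    calc (1 - α) / (1 + Δ) * (lam v * T)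
        ≤ (1 - α) / (1 + Δ) * ((1 + Δ) * lamhat v * T) := by gcongr; exact hest v
      _ = lamhat v * ((1 - α) * T) := by field_simp
  exact ⟨fun x hx => hx.const_mul hc₀ hc₁ hrate,
    mul_sSup_lpValues_le hc₀ hc₁ (fun v => mul_nonneg (hlam v) hT) hrate w⟩

/-- Lemma 4: scaling a feasible solution of `LP(λ, T)` by `(1-α)/(1+Δ)` yields a feasible
solution of `LP(λ̂, (1-α)T)` whenever `λ v ≤ (1+Δ)·λ̂ v`; consequently the optimal value of
`LP(λ̂, (1-α)T)` is at least `(1-α)/(1+Δ)` times the optimal value of `LP(λ, T)`. -/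
theorem lp_scaling {U V : Type*} [Fintype U] [Fintype V]
    (T α Δ : ℝ) (hT : 0 < T) (hα0 : 0 ≤ α) (hα1 : α ≤ 1) (hΔ : 0 ≤ Δ)
    (lam lamhat : V → ℝ) (hlam : ∀ v, 0 < lam v) (hlamhat : ∀ v, 0 < lamhat v)
    (hest : ∀ v, lam v ≤ (1 + Δ) * lamhat v)
    (w : U × V → ℝ) (hw : ∀ p, 0 ≤ w p) :
    (∀ x : U × V → ℝ, LPFeasible lam T x →
        LPFeasible lamhat ((1 - α) * T) (fun p => (1 - α) / (1 + Δ) * x p)) ∧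
    sSup {r : ℝ | ∃ x : U × V → ℝ,
        LPFeasible lamhat ((1 - α) * T) x ∧ r = ∑ p : U × V, w p * x p} ≥
      (1 - α) / (1 + Δ) *
        sSup {r : ℝ | ∃ x : U × V → ℝ, LPFeasible lam T x ∧ r = ∑ p : U × V, w p * x p} :=
  lp_scaling_general hT.le hα1 (by linarith) (by linarith) (fun v => (hlam v).le) hest w
end

section
/- Let D be a positive integer, let ι be a finite set (of packed items), let r : ι → Fin D → ℝ be nonnegative demand vectors and C : Fin D → ℝ be a nonnegative capacity vector. Suppose (i) for every dimension d, ∑_{i∈ι} r(i)(d) ≤ C(d), and (ii) for every item i there exists a dimension d with r(i)(d) > C(d)/2. Then the cardinality of ι is at most D. -/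
open Finset

section OrderedCancelAddMonoid

variable {ι κ M : Type*} [AddCommMonoid M] [PartialOrder M] [IsOrderedCancelAddMonoid M]

theorem subsingleton_setOf_lt_two_nsmul_of_sum_le {s : Finset ι} {f : ι → M} {c : M}
    (hf : ∀ i ∈ s, 0 ≤ f i) (hsum : ∑ i ∈ s, f i ≤ c) :
    {i | i ∈ s ∧ c < 2 • f i}.Subsingleton := by
  rintro i ⟨his, hi⟩ j ⟨hjs, hj⟩
  by_contra hne
  have hpair : f i + f j ≤ c := (add_le_sum hf his hjs hne).trans hsum
  have hlt : 2 • c < 2 • (f i + f j) := by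
    rw [two_nsmul c, nsmul_add]
    exact add_lt_add hi hj
  exact hlt.not_ge (nsmul_le_nsmul_right hpair 2)

-- `C d < 2 • r i d` is heaviness `C d / 2 < r i d` without division, so that integer
-- demands are covered with no rounding.
theorem heavy_items_card_le_general {s : Finset ι} {t : Finset κ} {r : ι → κ → M} {C : κ → M}
    (hr : ∀ i ∈ s, ∀ d ∈ t, 0 ≤ r i d) (hcap : ∀ d ∈ t, ∑ i ∈ s, r i d ≤ C d)
    (hheavy : ∀ i ∈ s, ∃ d ∈ t, C d < 2 • r i d) :
    #s ≤ #t :=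
  card_le_card_of_forall_subsingleton (fun i d ↦ C d < 2 • r i d) hheavy fun d hd ↦
    subsingleton_setOf_lt_two_nsmul_of_sum_le (fun i hi ↦ hr i hi d hd) (hcap d hd)

end OrderedCancelAddMonoid

/-- At most `D` items connected by heavy edges fit in one `D`-dimensional bin: if each item's
demand exceeds half the capacity in some dimension while total demands respect capacities,
then there are at most `D` items. -/
theorem heavy_items_card_le (D : ℕ) (hD : 0 < D) (ι : Type*) [Fintype ι]
    (r : ι → Fin D → ℝ) (C : Fin D → ℝ)
    (hr : ∀ i d, 0 ≤ r i d) (hC : ∀ d, 0 ≤ C d)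
    (hcap : ∀ d, ∑ i, r i d ≤ C d)
    (hheavy : ∀ i, ∃ d, C d / 2 < r i d) :
    Fintype.card ι ≤ D := by
  have hheavy' (i : ι) : ∃ d, C d < 2 • r i d := by
    simpa only [div_lt_iff₀' (zero_lt_two' ℝ), nsmul_eq_mul, Nat.cast_ofNat] using hheavy i
  simpa using heavy_items_card_le_general (s := univ) (t := univ)
    (fun i _ d _ ↦ hr i d) (fun d _ ↦ hcap d) (by simpa using hheavy')
end

section
/- Let D be a positive integer and let h be a real number with 0 ≤ h ≤ 1/(2D). Then g(h) := 2D/(2D+1) − h/(2D+1) + (2D² − D)·h + D²·h² − D − 2D²·(1+h)·ln(2D(1+h)/(2D+1)) ≥ 0. -/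
open Real

/-!
With `t = 1 + h` and `c = 1 / (2D + 1) + D - 2D² log (1 + 1 / (2D))`, the expression `g(h)` equals
`1 - c t + D² (t² - 1 - 2 t log t)`. The last bracket is nonnegative for `t ≥ 1`, so `D²` may be
replaced by `1`, which leaves `t (t - 2 log t - c)`. Since `t - 2 log t` is smallest at `t = 2`, it
suffices that `c ≤ 2 - 2 log 2 ≈ 0.614`, and `log (1 + x) ≥ 2x / (x + 2)` at `x = 1 / (2D)` gives
`c ≤ 1 / 3 + 1 / 4`.
-/

theorem two_mul_self_mul_log_le_sq_sub_one {t : ℝ} (ht : 1 ≤ t) : 2 * t * log t ≤ t ^ 2 - 1 := by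
  have t_pos : 0 < t := by positivity
  have log_le : log t ≤ (t - t⁻¹) / 2 := by
    rw [← sinh_log t_pos]
    exact self_le_sinh_iff.mpr (log_nonneg ht)
  calc 2 * t * log t ≤ 2 * t * ((t - t⁻¹) / 2) := by gcongr
    _ = t ^ 2 - 1 := by field_simp

theorem log_le_div_sub_one_add_log {a t : ℝ} (ha : 0 < a) (ht : 0 < t) :
    log t ≤ t / a - 1 + log a := by
  rw [← sub_le_iff_le_add, ← log_div ht.ne' ha.ne']
  exact log_le_sub_one_of_pos (div_pos ht ha)

theorem one_sub_mul_add_mul_sq_sub_log_nonneg {a c t : ℝ} (ha : 1 ≤ a) (hc : c ≤ 2 - 2 * log 2)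
    (ht : 1 ≤ t) : 0 ≤ 1 - c * t + a * (t ^ 2 - 1 - 2 * t * log t) := by
  have t_pos : 0 < t := by positivity
  have bracket_nonneg : 0 ≤ t ^ 2 - 1 - 2 * t * log t :=
    sub_nonneg.mpr (two_mul_self_mul_log_le_sq_sub_one ht)
  have tangent_at_two : log t ≤ t / 2 - 1 + log 2 := log_le_div_sub_one_add_log two_pos t_pos
  calc 0 ≤ t * (t - 2 * log t - c) := mul_nonneg t_pos.le (by linarith)
    _ = 1 - c * t + 1 * (t ^ 2 - 1 - 2 * t * log t) := by ring
    _ ≤ 1 - c * t + a * (t ^ 2 - 1 - 2 * t * log t) := by gcongr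

theorem sub_two_mul_sq_mul_log_one_add_le {d : ℝ} (hd : 0 < d) :
    d - 2 * d ^ 2 * log (1 + 1 / (2 * d)) ≤ 1 / 4 := by
  have le_log : 2 / (4 * d + 1) ≤ log (1 + 1 / (2 * d)) := by
    convert le_log_one_add_of_nonneg (show 0 ≤ 1 / (2 * d) by positivity) using 1
    field_simp
    ring
  calc d - 2 * d ^ 2 * log (1 + 1 / (2 * d)) ≤ d - 2 * d ^ 2 * (2 / (4 * d + 1)) := by gcongr
    _ = d / (4 * d + 1) := by field_simp; ring
    _ ≤ 1 / 4 := by rw [div_le_div_iff₀ (by positivity) four_pos]; linarith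

theorem one_div_add_sub_two_mul_sq_mul_log_le {d : ℝ} (hd : 1 ≤ d) :
    1 / (2 * d + 1) + d - 2 * d ^ 2 * log (1 + 1 / (2 * d)) ≤ 2 - 2 * log 2 := by
  have one_div_le : 1 / (2 * d + 1) ≤ 1 / 3 :=
    one_div_le_one_div_of_le three_pos (by linarith)
  have sub_log_le := sub_two_mul_sq_mul_log_one_add_le (zero_lt_one.trans_le hd)
  linarith [log_two_lt_d9]

theorem g_nonneg_general {d h : ℝ} (hd : 1 ≤ d) (hh : 0 ≤ h) :
    0 ≤ 2 * d / (2 * d + 1) - h / (2 * d + 1) + (2 * d ^ 2 - d) * h + d ^ 2 * h ^ 2 - d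
      - 2 * d ^ 2 * (1 + h) * log (2 * d * (1 + h) / (2 * d + 1)) := by
  have log_eq : log (2 * d * (1 + h) / (2 * d + 1)) = log (1 + h) - log (1 + 1 / (2 * d)) := by
    rw [← log_div (by positivity) (by positivity)]
    congr 1
    field_simp
  have normal_form_nonneg := one_sub_mul_add_mul_sq_sub_log_nonneg (one_le_pow₀ hd : 1 ≤ d ^ 2)
    (one_div_add_sub_two_mul_sq_mul_log_le hd) (le_add_of_nonneg_right hh : 1 ≤ 1 + h)
  rw [log_eq]
  convert normal_form_nonneg using 1
  field_simp
  ring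

/-- The key inequality `g(h) ≥ 0` for `0 ≤ h ≤ 1/(2D)` in the proof of Corollary 3. -/
theorem g_nonneg (D : ℕ) (hD : 0 < D) (h : ℝ) (hh0 : 0 ≤ h) (hh1 : h ≤ 1 / (2 * (D : ℝ))) :
    2 * (D : ℝ) / (2 * D + 1) - h / (2 * D + 1) + (2 * (D : ℝ) ^ 2 - D) * h
        + (D : ℝ) ^ 2 * h ^ 2 - D
        - 2 * (D : ℝ) ^ 2 * (1 + h) * Real.log (2 * D * (1 + h) / (2 * D + 1)) ≥ 0 :=
  g_nonneg_general (Nat.one_le_cast.mpr hD) hh0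
end

section
/- Let D be a positive integer and set η* := 2 − 1/(2D) − √(1 + 1/(4D²)). Then (1 − η*)·(1 − D(1 − η*)) = √(4D² + 1) − 2D, and for every real number η: exp(−η)·(1 − η)·(1 − D(1 − η)) ≤ exp(−η*)·(√(4D² + 1) − 2D). -/
open Real

/-! At `η*` the concave quadratic `f₂` equals its own derivative, so its tangent line there is
`f₂ η* * (1 + (η - η*))`. This line lies above `f₂` by concavity, and below `f₂ η* * exp (η - η*)`
because `1 + t ≤ exp t` and `f₂ η* ≥ 0`. -/

theorem isMaxOn_exp_neg_mul_of_le_mul_sub_add_one {f : ℝ → ℝ} {s : Set ℝ} {a : ℝ} (ha : 0 ≤ f a)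
    (hf : ∀ x ∈ s, f x ≤ f a * (x - a + 1)) : IsMaxOn (fun x => exp (-x) * f x) s a := by
  refine isMaxOn_iff.mpr fun x hx => ?_
  calc exp (-x) * f x
      ≤ exp (-x) * (f a * (x - a + 1)) := by gcongr; exact hf x hx
    _ ≤ exp (-x) * (f a * exp (x - a)) := by gcongr; exact add_one_le_exp (x - a)
    _ = exp (-x + (x - a)) * f a := by rw [exp_add]; ring
    _ = exp (-a) * f a := by ring_nf

/-- The factor `f₂` of Corollary 4 as a function of the phase parameter `η`, for a real parameter
`d` in place of the integer `D`. -/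
def phaseFactor (d η : ℝ) : ℝ :=
  (1 - η) * (1 - d * (1 - η))

/-- The optimal phase parameter `η*` of Corollary 4, for a real parameter `d` in place of the
integer `D`; it has this meaning only for `0 < d`. -/
noncomputable def etaStar (d : ℝ) : ℝ :=
  2 - 1 / (2 * d) - √(1 + 1 / (4 * d ^ 2))

theorem phaseFactor_le_tangent {d : ℝ} (hd : 0 ≤ d) (a η : ℝ) :
    phaseFactor d η ≤ phaseFactor d a + (2 * d * (1 - a) - 1) * (η - a) := by
  have taylor : phaseFactor d η =
      phaseFactor d a + (2 * d * (1 - a) - 1) * (η - a) - d * (η - a) ^ 2 := by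
    unfold phaseFactor
    ring
  rw [taylor]
  exact sub_le_self _ (by positivity)

theorem two_mul_le_sqrt_four_mul_sq_add_one (d : ℝ) : 2 * d ≤ √(4 * d ^ 2 + 1) :=
  le_sqrt_of_sq_le (by linarith)

theorem two_mul_mul_one_sub_etaStar {d : ℝ} (hd : 0 < d) :
    2 * d * (1 - etaStar d) = 1 + √(4 * d ^ 2 + 1) - 2 * d := by
  have hsqrt : 2 * d * √(1 + 1 / (4 * d ^ 2)) = √(4 * d ^ 2 + 1) := by
    rw [← sqrt_sq (by positivity : 0 ≤ 2 * d), ← sqrt_mul (by positivity)]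
    congr 1
    field_simp
    ring
  have hinv : 2 * d * (1 / (2 * d)) = 1 := mul_one_div_cancel (by positivity)
  unfold etaStar
  linear_combination hsqrt + hinv

theorem phaseFactor_etaStar {d : ℝ} (hd : 0 < d) :
    phaseFactor d (etaStar d) = √(4 * d ^ 2 + 1) - 2 * d := by
  have hsq : √(4 * d ^ 2 + 1) ^ 2 = 4 * d ^ 2 + 1 := sq_sqrt (by positivity)
  refine mul_left_cancel₀ (by positivity : 4 * d ≠ 0) ?_
  calc 4 * d * phaseFactor d (etaStar d)
      = 2 * d * (1 - etaStar d) * (2 - 2 * d * (1 - etaStar d)) := by unfold phaseFactor; ring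
    _ = 1 - (√(4 * d ^ 2 + 1) - 2 * d) ^ 2 := by rw [two_mul_mul_one_sub_etaStar hd]; ring
    _ = 4 * d * (√(4 * d ^ 2 + 1) - 2 * d) := by linear_combination -hsq

theorem isMaxOn_exp_neg_mul_phaseFactor {d : ℝ} (hd : 0 < d) :
    IsMaxOn (fun η => exp (-η) * phaseFactor d η) Set.univ (etaStar d) := by
  have hnonneg : 0 ≤ phaseFactor d (etaStar d) := by
    rw [phaseFactor_etaStar hd]
    exact sub_nonneg.mpr (two_mul_le_sqrt_four_mul_sq_add_one d)
  have hslope : 2 * d * (1 - etaStar d) - 1 = phaseFactor d (etaStar d) := by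
    rw [two_mul_mul_one_sub_etaStar hd, phaseFactor_etaStar hd]
    ring
  refine isMaxOn_exp_neg_mul_of_le_mul_sub_add_one hnonneg fun η _ => ?_
  calc phaseFactor d η
      ≤ phaseFactor d (etaStar d) + (2 * d * (1 - etaStar d) - 1) * (η - etaStar d) :=
        phaseFactor_le_tangent hd.le _ η
    _ = phaseFactor d (etaStar d) * (η - etaStar d + 1) := by rw [hslope]; ring

theorem eta_star_opt_general {d : ℝ} (hd : 0 < d) :
    phaseFactor d (etaStar d) = √(4 * d ^ 2 + 1) - 2 * d ∧
      ∀ η : ℝ, exp (-η) * phaseFactor d η ≤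
        exp (-etaStar d) * (√(4 * d ^ 2 + 1) - 2 * d) := by
  refine ⟨phaseFactor_etaStar hd, fun η => ?_⟩
  rw [← phaseFactor_etaStar hd]
  exact isMaxOn_exp_neg_mul_phaseFactor hd (Set.mem_univ η)

/-- In Corollary 4, `η* = 2 - 1/(2D) - √(1+1/(4D²))` satisfies
`(1-η*)(1-D(1-η*)) = √(4D²+1) - 2D` and globally maximizes
`η ↦ e^{-η}(1-η)(1-D(1-η))` over `ℝ`. -/
theorem eta_star_opt (D : ℕ) (hD : 0 < D) :
    (1 - (2 - 1 / (2 * (D : ℝ)) - Real.sqrt (1 + 1 / (4 * (D : ℝ) ^ 2)))) *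
        (1 - (D : ℝ) * (1 - (2 - 1 / (2 * (D : ℝ)) - Real.sqrt (1 + 1 / (4 * (D : ℝ) ^ 2))))) =
      Real.sqrt (4 * (D : ℝ) ^ 2 + 1) - 2 * D ∧
    ∀ η : ℝ, Real.exp (-η) * (1 - η) * (1 - (D : ℝ) * (1 - η)) ≤
      Real.exp (-(2 - 1 / (2 * (D : ℝ)) - Real.sqrt (1 + 1 / (4 * (D : ℝ) ^ 2)))) *
        (Real.sqrt (4 * (D : ℝ) ^ 2 + 1) - 2 * D) := by
  simpa only [phaseFactor, etaStar, ← mul_assoc] using eta_star_opt_general (Nat.cast_pos.mpr hD)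
end

section
/- Let D > 0, h ≥ 0, η > 0 with h + η > 0 and h + η ≤ 1, and let f₁ > 0 be a real number. For α ∈ [0, η] define F^H(α) := (1/D)·(h + α)·ln((h + η)/(h + α)) and F^L(α) := ((h + α)/(h + η))·f₁. Set α* := max{ (h+η)·exp(−D·f₁/(h+η)) − h, (h+η)·e^{−1} − h, 0 }. Then α* ∈ [0, η], min(F^H(α*), F^L(α*)) = F^H(α*), and for every α ∈ [0, η]: min(F^H(α), F^L(α)) ≤ F^H(α*). -/
open Real

/-!
In the normalised variable `t = (h + α) / (h + η)` and with `c = D f₁ / (h + η)`, the two guarantees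
are, up to the common factor `(h + η) / D`, the entropy function `-t log t` and the line `c t`. The
entropy function increases up to `e⁻¹`, decreases afterwards, and lies below the line exactly from
`t = e⁻ᶜ` on. The minimum of the two therefore increases up to `max (e⁻ᶜ) (e⁻¹)` and decreases
afterwards, and its maximum over a half-line `[s, ∞)` is at the larger of this peak and `s`.
-/

lemma monotoneOn_negMulLog : MonotoneOn negMulLog (Set.Icc 0 (exp (-1))) := by
  simpa only [negMulLog_eq_neg] using! mul_log_strictAntiOn.antitoneOn.neg

lemma antitoneOn_negMulLog : AntitoneOn negMulLog (Set.Ici (exp (-1))) := by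
  simpa only [negMulLog_eq_neg] using! mul_log_strictMonoOn.monotoneOn.neg

lemma negMulLog_exp_neg (c : ℝ) : negMulLog (exp (-c)) = c * exp (-c) := by
  rw [negMulLog, log_exp]
  ring

lemma negMulLog_le_mul_iff {c t : ℝ} (ht : 0 < t) : negMulLog t ≤ c * t ↔ exp (-c) ≤ t := by
  rw [negMulLog, neg_mul_comm, mul_comm c, mul_le_mul_iff_right₀ ht, neg_le, le_log_iff_exp_le ht]

lemma mul_log_div_eq_mul_negMulLog {H : ℝ} (hH : H ≠ 0) (x : ℝ) :
    x * log (H / x) = H * negMulLog (x / H) := by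
  rw [negMulLog, ← inv_div, log_inv]
  field_simp

/-- The maximiser over `[s, ∞)` of `t ↦ min (-t log t) (c t)`, for `0 ≤ c` and `0 ≤ s`: the paper's
`α*` in the variable `t = (h + α) / (h + η)`, with `c = D f₁ / (h + η)` and `s = h / (h + η)`. -/
noncomputable def optThreshold (c s : ℝ) : ℝ :=
  max (max (exp (-c)) (exp (-1))) s

section optThreshold

variable {c s t : ℝ}

lemma exp_neg_le_optThreshold : exp (-c) ≤ optThreshold c s :=
  le_max_of_le_left (le_max_left _ _)

lemma exp_neg_one_le_optThreshold : exp (-1) ≤ optThreshold c s :=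
  le_max_of_le_left (le_max_right _ _)

lemma optThreshold_le_one (hc : 0 ≤ c) (hs : s ≤ 1) : optThreshold c s ≤ 1 :=
  max_le (max_le (exp_le_one_iff.2 (by linarith)) (exp_le_one_iff.2 (by norm_num))) hs

lemma negMulLog_optThreshold_le : negMulLog (optThreshold c s) ≤ c * optThreshold c s :=
  (negMulLog_le_mul_iff ((exp_pos _).trans_le exp_neg_le_optThreshold)).2 exp_neg_le_optThreshold

lemma min_negMulLog_mul_le_of_le_max (hc : 0 ≤ c) (ht₀ : 0 ≤ t)
    (ht : t ≤ max (exp (-c)) (exp (-1))) :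
    min (negMulLog t) (c * t) ≤ negMulLog (max (exp (-c)) (exp (-1))) := by
  rcases max_choice (exp (-c)) (exp (-1)) with hmax | hmax <;> rw [hmax] at ht ⊢
  · calc min (negMulLog t) (c * t) ≤ c * t := min_le_right _ _
      _ ≤ c * exp (-c) := by gcongr
      _ = negMulLog (exp (-c)) := (negMulLog_exp_neg c).symm
  · exact min_le_of_left_le (monotoneOn_negMulLog ⟨ht₀, ht⟩ ⟨(exp_pos _).le, le_rfl⟩ ht)

lemma min_negMulLog_mul_le_negMulLog_optThreshold (hc : 0 ≤ c) (ht₀ : 0 ≤ t) (hst : s ≤ t) :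
    min (negMulLog t) (c * t) ≤ negMulLog (optThreshold c s) := by
  rcases le_total (optThreshold c s) t with hle | hle
  · exact min_le_of_left_le (antitoneOn_negMulLog exp_neg_one_le_optThreshold
      (exp_neg_one_le_optThreshold.trans hle) hle)
  · rcases le_total s (max (exp (-c)) (exp (-1))) with hs | hs
    · rw [optThreshold, max_eq_left hs] at hle ⊢
      exact min_negMulLog_mul_le_of_le_max hc ht₀ hle
    · rw [optThreshold, max_eq_right hs] at hle ⊢
      exact min_le_of_left_le (congrArg negMulLog (hle.antisymm hst)).le

lemma mul_optThreshold_sub {H : ℝ} (hH : 0 < H) (c h : ℝ) :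
    H * optThreshold c (h / H) - h =
      max (max (H * exp (-c) - h) (H * exp (-1) - h)) 0 := by
  rw [optThreshold, mul_max_of_nonneg _ _ hH.le, mul_max_of_nonneg _ _ hH.le,
    mul_div_cancel₀ _ hH.ne', ← max_sub_sub_right, ← max_sub_sub_right, sub_self]

end optThreshold

theorem no_lp_phase_opt_general (D h η f₁ : ℝ) (hD : 0 < D) (hh : 0 ≤ h) (hη : 0 ≤ η)
    (hpos : 0 < h + η) (hf₁ : 0 ≤ f₁) :
    let FH : ℝ → ℝ := fun α => 1 / D * (h + α) * log ((h + η) / (h + α))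
    let FL : ℝ → ℝ := fun α => (h + α) / (h + η) * f₁
    let αs : ℝ := max (max ((h + η) * exp (-(D * f₁) / (h + η)) - h)
      ((h + η) * exp (-1) - h)) 0
    (0 ≤ αs ∧ αs ≤ η) ∧ min (FH αs) (FL αs) = FH αs ∧
      ∀ α : ℝ, 0 ≤ α → min (FH α) (FL α) ≤ FH αs := by
  set H := h + η
  intro FH FL αs
  set c := D * f₁ / H with hc_def
  have hc : 0 ≤ c := by positivity
  have hFH (α : ℝ) : FH α = H / D * negMulLog ((h + α) / H) := by
    rw [div_mul_eq_mul_div, ← mul_log_div_eq_mul_negMulLog hpos.ne']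
    ring
  have hFL (α : ℝ) : FL α = H / D * (c * ((h + α) / H)) := by
    simp only [FL, hc_def]
    field_simp
  have hαs : αs = H * optThreshold c (h / H) - h := by
    rw [mul_optThreshold_sub hpos, hc_def, ← neg_div]
  have ht : (h + αs) / H = optThreshold c (h / H) := by
    rw [hαs, add_sub_cancel, mul_div_cancel_left₀ _ hpos.ne']
  refine ⟨⟨le_max_right _ _, ?_⟩, ?_, fun α hα => ?_⟩
  · have hle_one : optThreshold c (h / H) ≤ 1 :=
      optThreshold_le_one hc (div_le_one_of_le₀ (by linarith) hpos.le)
    linarith [mul_le_of_le_one_right hpos.le hle_one]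
  · rw [min_eq_left_iff, hFH, hFL, ht]
    gcongr
    exact negMulLog_optThreshold_le
  · rw [hFH, hFL, hFH, ht, ← mul_min_of_nonneg _ _ (by positivity)]
    gcongr
    exact min_negMulLog_mul_le_negMulLog_optThreshold hc (by positivity) (by gcongr; linarith)

/-- Optimization content of Proposition 2 (no-LP-phases heuristic with `η ≤ 1 - h`): the choice
`α* = max{(h+η)e^{-Df₁/(h+η)} - h, (h+η)e^{-1} - h, 0}` lies in `[0, η]`, satisfies
`min(F^H(α*), F^L(α*)) = F^H(α*)`, and maximizes `α ↦ min(F^H(α), F^L(α))` over `[0, η]`. -/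
theorem no_lp_phase_opt (D h η f₁ : ℝ) (hD : 0 < D) (hh : 0 ≤ h) (hη : 0 < η)
    (hpos : 0 < h + η) (hle : h + η ≤ 1) (hf₁ : 0 < f₁) :
    let FH : ℝ → ℝ := fun α => 1 / D * (h + α) * Real.log ((h + η) / (h + α))
    let FL : ℝ → ℝ := fun α => (h + α) / (h + η) * f₁
    let αs : ℝ := max (max ((h + η) * Real.exp (-(D * f₁) / (h + η)) - h)
      ((h + η) * Real.exp (-1) - h)) 0
    (0 ≤ αs ∧ αs ≤ η) ∧ min (FH αs) (FL αs) = FH αs ∧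
      ∀ α : ℝ, 0 ≤ α → α ≤ η → min (FH α) (FL α) ≤ FH αs := by
  intro FH FL αs
  obtain ⟨hαs, hmin, hmax⟩ := no_lp_phase_opt_general D h η f₁ hD hh hη.le hpos hf₁.le
  exact ⟨hαs, hmin, fun α hα _ => hmax α hα⟩
end
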